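/- Let g be a Lie algebra over a commutative ring R and let μ ∈ C^2(g) be its Lie bracket, μ(x,y) = [x,y]. Then for every A ∈ C^a(g), the Nijenhuis bracket with μ computes the Chevalley–Eilenberg coboundary of A regarded as an a-cochain of g with coefficients in the adjoint module, up to a uniform sign: [μ, A] = (−1)^{a+1} δA, where δA(x_0,…,x_a) = Σ_{i=0}^{a} (−1)^i [x_i, A(x_0,…,x̂_i,…,x_a)] + Σ_{0 ≤ i < j ≤ a} (−1)^{i+j} A([x_i,x_j], x_0,…,x̂_i,…,x̂_j,…,x_a). -/

import Mathlib

/-!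
Nijenhuis bracket on alternating multilinear cochains `C^n(V)` of an `R`-module `V`.

We encode an `n`-ary map `(Fin n → V) → V` as a map `(ℕ → V) → V` (depending only on the
first `n` coordinates) via `ext`, so that the insertion product and the Nijenhuis bracket,
whose output arities involve `ℕ`-subtraction, can be stated uniformly.
-/

/-- Extend an `n`-ary map on `V` to a map on sequences, reading the first `n` coordinates. -/
def ext {V : Type*} {n : ℕ} (f : (Fin n → V) → V) : (ℕ → V) → V :=
  fun x => f fun i => x i

/-- The insertion product `A∘B` of an `a`-ary map `f` and a `b`-ary map `g`
(encoded as maps on sequences):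
`(A∘B)(x_1,…,x_{a+b−1}) = Σ_σ sgn(σ) A(B(x_{σ(1)},…,x_{σ(b)}), x_{σ(b+1)},…,x_{σ(a+b−1)})`,
the sum running over all permutations `σ` of `{1,…,a+b−1}` increasing on the first `b` and
on the last `a-1` positions; it is `0` when `a = 0`. -/
noncomputable def ins {V : Type*} [AddCommGroup V] (a b : ℕ) (f g : (ℕ → V) → V) :
    (ℕ → V) → V := fun x =>
  if hA : a = 0 then 0
  else
    ∑ σ ∈ Finset.univ.filter (fun σ : Equiv.Perm (Fin (a + b - 1)) =>
        (∀ i j : Fin (a + b - 1), i < j → (j : ℕ) < b → σ i < σ j) ∧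
        (∀ i j : Fin (a + b - 1), i < j → b ≤ (i : ℕ) → σ i < σ j)),
      (Equiv.Perm.sign σ : ℤ) •
        f (fun i : ℕ =>
          if i = 0 then
            g (fun k : ℕ =>
              if hk : k < b then x ((σ ⟨k, by omega⟩ : Fin (a + b - 1)) : ℕ) else 0)
          else if hi : b + i - 1 < a + b - 1 then
            x ((σ ⟨b + i - 1, hi⟩ : Fin (a + b - 1)) : ℕ)
          else 0)

/-- The Nijenhuis bracket `[A,B] := A∘B − (−1)^{(a−1)(b−1)} B∘A`. -/
noncomputable def nij {V : Type*} [AddCommGroup V] (a b : ℕ) (f g : (ℕ → V) → V) :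
    (ℕ → V) → V := fun x =>
  ins a b f g x - (Int.negOnePow (((a : ℤ) - 1) * ((b : ℤ) - 1)) : ℤ) • ins b a g f x


/-- The Chevalley–Eilenberg coboundary of an `a`-cochain of a Lie ring `L` with coefficients
in the adjoint module:
`δA(x_0,…,x_a) = Σ_i (−1)^i [x_i, A(x_0,…,x̂_i,…,x_a)]
  + Σ_{i<j} (−1)^{i+j} A([x_i,x_j], x_0,…,x̂_i,…,x̂_j,…,x_a)`. -/
noncomputable def ce {L : Type*} [LieRing L] {a : ℕ} (A : (Fin a → L) → L) :
    (Fin (a + 1) → L) → L := fun x =>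
  (∑ i : Fin (a + 1), ((-1 : ℤ) ^ (i : ℕ)) • ⁅x i, A (fun j => x (i.succAbove j))⁆)
  + ∑ i : Fin (a + 1), ∑ j : Fin (a + 1),
      if (i : ℕ) < (j : ℕ) then
        ((-1 : ℤ) ^ ((i : ℕ) + (j : ℕ))) •
          A (fun m : Fin a =>
            if hm : (m : ℕ) = 0 then ⁅x i, x j⁆
            else
              x ⟨if (m : ℕ) - 1 < (i : ℕ) then (m : ℕ) - 1
                 else if (m : ℕ) < (j : ℕ) then (m : ℕ)
                 else (m : ℕ) + 1,
                 by have := m.2; split_ifs <;> omega⟩)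
      else 0

/-
In `μ∘A` the shuffles are determined by the last index `i`, the one outside `A`; in `A∘μ` they are
determined by the two indices `i < j` inside `μ`. Each is a composite of cycles, so its sign is
explicit, and the two insertion products become the two sums of the coboundary, once antisymmetry of
the bracket has turned `⁅A(…), x i⁆` into `-⁅x i, A(…)⁆`.
-/

open Equiv (Perm)

section Shuffle

/-- The `(b, n - b)`-shuffles indexing the insertion product of a `b`-ary map: permutations
increasing on the first `b` positions and on the remaining ones. -/
def IsShuffle (b : ℕ) {n : ℕ} (σ : Perm (Fin n)) : Prop :=
  StrictMonoOn σ {k | (k : ℕ) < b} ∧ StrictMonoOn σ {k | b ≤ (k : ℕ)}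

noncomputable instance (b n : ℕ) : DecidablePred (IsShuffle b (n := n)) :=
  Classical.decPred _

lemma isShuffle_iff {b n : ℕ} {σ : Perm (Fin n)} :
    IsShuffle b σ ↔ (∀ i j : Fin n, i < j → (j : ℕ) < b → σ i < σ j) ∧
      (∀ i j : Fin n, i < j → b ≤ (i : ℕ) → σ i < σ j) :=
  and_congr
    ⟨fun h _ _ hij hj => h (lt_trans (Fin.lt_def.1 hij) hj) hj hij,
      fun h _ _ _ hj hij => h _ _ hij hj⟩
    ⟨fun h _ _ hij hi => h hi (hi.trans (Fin.lt_def.1 hij).le) hij,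
      fun h _ hi _ _ hij => h _ _ hij hi⟩

lemma equiv_eq_of_strictMonoOn_of_eqOn_compl {α β : Type*} [LinearOrder α] [WellFoundedLT α]
    [Preorder β] {e e' : α ≃ β} {s : Set α} (he : StrictMonoOn e s)
    (he' : StrictMonoOn e' s) (heq : Set.EqOn e e' sᶜ) : e = e' := by
  have himage_compl : e '' sᶜ = e' '' sᶜ := heq.image_eq
  have himage : e '' s = e' '' s := by
    rwa [Set.image_compl_eq e.bijective, Set.image_compl_eq e'.bijective, compl_inj_iff]
      at himage_compl
  have hrestrict : s.domRestrict e = s.domRestrict e' :=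
    (he.strictMono.range_inj he'.strictMono).1 <| by
      rwa [Set.range_comp, Set.range_comp, Subtype.range_coe]
  ext k
  by_cases hk : k ∈ s
  · exact congrFun hrestrict ⟨k, hk⟩
  · exact heq hk

variable {n : ℕ}

lemma IsShuffle.eq_of_apply_last {σ τ : Perm (Fin (n + 1))} (hσ : IsShuffle n σ)
    (hτ : IsShuffle n τ) (hlast : σ (Fin.last n) = τ (Fin.last n)) : σ = τ := by
  refine equiv_eq_of_strictMonoOn_of_eqOn_compl hσ.1 hτ.1 fun k hk => ?_
  have hk : (k : ℕ) = n := le_antisymm k.is_le (not_lt.1 hk)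
  rwa [show k = Fin.last n from Fin.ext hk]

lemma IsShuffle.eq_of_apply_zero_one {σ τ : Perm (Fin (n + 2))} (hσ : IsShuffle 2 σ)
    (hτ : IsShuffle 2 τ) (hzero : σ 0 = τ 0) (hone : σ 1 = τ 1) : σ = τ := by
  refine equiv_eq_of_strictMonoOn_of_eqOn_compl hσ.2 hτ.2 fun k hk => ?_
  induction k using Fin.cases with
  | zero => exact hzero
  | succ k =>
    induction k using Fin.cases with
    | zero => exact hone
    | succ k => simp at hk

end Shuffle

section LastIndex

variable {n : ℕ}

lemma cycleIcc_last_apply_castSucc (i : Fin (n + 1)) (k : Fin n) :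
    Fin.cycleIcc i (Fin.last n) k.castSucc = i.succAbove k := by
  simpa using congrFun (Fin.cycleIcc_comp_succAbove i (Fin.last n) (Fin.le_last i)) k

lemma cycleIcc_last_apply_last (i : Fin (n + 1)) :
    Fin.cycleIcc i (Fin.last n) (Fin.last n) = i :=
  Fin.cycleIcc_of_last (Fin.le_last i)

lemma sign_cycleIcc_last (i : Fin (n + 1)) :
    (Perm.sign (Fin.cycleIcc i (Fin.last n)) : ℤ) = (-1) ^ (n + i : ℕ) := by
  have hpow : n + (i : ℕ) = (n - i) + 2 * i := by omega
  rw [Fin.sign_cycleIcc_of_le (Fin.le_last i), hpow, pow_add, pow_mul]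
  simp

lemma isShuffle_cycleIcc_last (i : Fin (n + 1)) : IsShuffle n (Fin.cycleIcc i (Fin.last n)) := by
  constructor
  · intro p hp q hq hpq
    obtain ⟨p, rfl⟩ : ∃ p', Fin.castSucc p' = p := ⟨⟨p, hp⟩, rfl⟩
    obtain ⟨q, rfl⟩ : ∃ q', Fin.castSucc q' = q := ⟨⟨q, hq⟩, rfl⟩
    simpa only [cycleIcc_last_apply_castSucc] using Fin.strictMono_succAbove i hpq
  · intro p hp q _ hpq
    exact absurd (hpq.trans_le q.le_last) (not_lt.2 hp)

lemma sum_isShuffle_last {M : Type*} [AddCommMonoid M] (φ : Perm (Fin (n + 1)) → M) :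
    ∑ σ with IsShuffle n σ, φ σ = ∑ i, φ (Fin.cycleIcc i (Fin.last n)) := by
  refine (Finset.sum_nbij (fun i => Fin.cycleIcc i (Fin.last n)) ?_ ?_ ?_ fun _ _ => rfl).symm
  · intro i _
    simpa using isShuffle_cycleIcc_last i
  · intro i _ j _ hij
    simpa only [cycleIcc_last_apply_last] using congrArg (· (Fin.last n)) hij
  · intro σ hσ
    have hσ : IsShuffle n σ := by simpa using hσ
    exact ⟨σ (Fin.last n), by simp,
      (isShuffle_cycleIcc_last _).eq_of_apply_last hσ (cycleIcc_last_apply_last _)⟩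

end LastIndex

section FirstTwoIndices

variable {n : ℕ}

/-- The permutation `0 ↦ i`, `1 ↦ i.succAbove j` that lists the remaining indices in increasing
order. Taking `j` in `Fin (n + 1)` makes the second index differ from `i` by construction; for
`i < j.succ` it is `j.succ`. -/
def pairFirst (i : Fin (n + 2)) (j : Fin (n + 1)) : Perm (Fin (n + 2)) :=
  i.cycleRange.symm * Perm.decomposeFin.symm (0, j.cycleRange.symm)

variable (i : Fin (n + 2)) (j : Fin (n + 1))

lemma pairFirst_zero : pairFirst i j 0 = i := by
  simp [pairFirst]

lemma pairFirst_one : pairFirst i j 1 = i.succAbove j := by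
  simp [pairFirst]

lemma pairFirst_succ_succ (k : Fin n) :
    pairFirst i j k.succ.succ = i.succAbove (j.succAbove k) := by
  simp [pairFirst]

lemma sign_pairFirst : (Perm.sign (pairFirst i j) : ℤ) = (-1) ^ (i + j : ℕ) := by
  simp [pairFirst, pow_add, Perm.sign_symm]

variable {i j}

lemma val_succAbove_succAbove (hij : i < j.succ) (k : Fin n) :
    (i.succAbove (j.succAbove k) : ℕ) =
      if (k : ℕ) < i then (k : ℕ) else if (k : ℕ) < j then k + 1 else k + 2 := by
  have hij : (i : ℕ) < j + 1 := hij
  simp only [Fin.succAbove, Fin.lt_def, apply_ite Fin.val, Fin.val_castSucc, Fin.val_succ]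
  split_ifs <;> omega

lemma isShuffle_pairFirst (hij : i < j.succ) : IsShuffle 2 (pairFirst i j) := by
  constructor
  · intro p hp q hq hpq
    have hpq' : (p : ℕ) < q := hpq
    have hq : (q : ℕ) < 2 := hq
    obtain rfl : p = 0 := Fin.ext (by rw [Fin.val_zero]; omega)
    obtain rfl : q = 1 := Fin.ext (by rw [Fin.val_one]; omega)
    rwa [pairFirst_zero, pairFirst_one, Fin.lt_succAbove_iff_lt_castSucc]
  · intro p hp q hq hpq
    obtain ⟨p, rfl⟩ : ∃ p' : Fin n, p'.succ.succ = p := ⟨p.subNat 2 hp, p.addNat_subNat hp⟩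
    obtain ⟨q, rfl⟩ : ∃ q' : Fin n, q'.succ.succ = q := ⟨q.subNat 2 hq, q.addNat_subNat hq⟩
    simpa only [pairFirst_succ_succ, Fin.succAbove_lt_succAbove_iff, Fin.succ_lt_succ_iff]
      using hpq

lemma sum_isShuffle_two {M : Type*} [AddCommMonoid M] (φ : Perm (Fin (n + 2)) → M) :
    ∑ σ with IsShuffle 2 σ, φ σ =
      ∑ i, ∑ j : Fin (n + 1) with i < j.succ, φ (pairFirst i j) := by
  rw [Finset.sum_sigma']
  symm
  refine Finset.sum_nbij (fun p => pairFirst p.1 p.2) ?_ ?_ ?_ fun _ _ => rfl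
  · rintro ⟨i, j⟩ hij
    simpa using isShuffle_pairFirst (by simpa using hij)
  · rintro ⟨i, j⟩ _ ⟨i', j'⟩ _ (heq : pairFirst i j = pairFirst i' j')
    obtain rfl : i = i' := by rw [← pairFirst_zero i j, heq, pairFirst_zero]
    obtain rfl : j = j' := i.succAbove_right_injective (by
      rw [← pairFirst_one i j, heq, pairFirst_one])
    rfl
  · intro σ hσ
    have hσ : IsShuffle 2 σ := by simpa using hσ
    have hlt : σ 0 < σ 1 := hσ.1 (by simp) (by simp) (by simp)
    obtain ⟨j, hj⟩ := Fin.exists_succAbove_eq hlt.ne'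
    have hij : σ 0 < j.succ := by rwa [← Fin.lt_succAbove_iff_lt_castSucc, hj]
    exact ⟨⟨σ 0, j⟩, by simpa using hij, (isShuffle_pairFirst hij).eq_of_apply_zero_one hσ
      (pairFirst_zero _ _) ((pairFirst_one _ _).trans hj)⟩

end FirstTwoIndices

section InsertionProduct

variable {V : Type*} [AddCommGroup V] {a b : ℕ}

lemma ins_zero (b : ℕ) (f g : (ℕ → V) → V) : ins 0 b f g = 0 := rfl

lemma ins_succ_ext {n : ℕ} (hn : b + a = n) (F : (Fin (a + 1) → V) → V) (G : (Fin b → V) → V)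
    (x : ℕ → V) :
    ins (a + 1) b (ext F) (ext G) x =
      ∑ σ : Perm (Fin n) with IsShuffle b σ, (Perm.sign σ : ℤ) •
        F (Fin.cons (G fun k => x (σ ⟨k, by omega⟩)) fun k => x (σ ⟨b + k, by omega⟩)) := by
  obtain rfl : a + 1 + b - 1 = n := by omega
  rw [ins, dif_neg a.succ_ne_zero]
  refine Finset.sum_congr (by simp only [isShuffle_iff]) fun σ _ => ?_
  congr 1
  refine congrArg F (funext fun k => ?_)
  induction k using Fin.cases with
  | zero => simp [ext]
  | succ k =>
    have hk : b + (k : ℕ) < a + b := by omega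
    simp [hk]

lemma ins_two_ext (F : (Fin 2 → V) → V) (G : (Fin a → V) → V) (x : ℕ → V) :
    ins 2 a (ext F) (ext G) x =
      ∑ i : Fin (a + 1), (-1 : ℤ) ^ (a + i : ℕ) • F ![G fun k => x (i.succAbove k), x i] := by
  rw [ins_succ_ext rfl, sum_isShuffle_last]
  refine Finset.sum_congr rfl fun i _ => ?_
  rw [sign_cycleIcc_last]
  refine congrArg _ (congrArg F (funext fun k => ?_))
  fin_cases k
  · refine congrArg G (funext fun k => ?_)
    rw [← cycleIcc_last_apply_castSucc]
    rfl
  · exact congrArg (fun k : Fin (a + 1) => x k) (cycleIcc_last_apply_last i)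

lemma ins_ext_two (F : (Fin (a + 1) → V) → V) (G : (Fin 2 → V) → V) (x : ℕ → V) :
    ins (a + 1) 2 (ext F) (ext G) x =
      ∑ i : Fin (a + 2), ∑ j : Fin (a + 1) with i < j.succ, (-1 : ℤ) ^ (i + j : ℕ) •
        F (Fin.cons (G ![x i, x j.succ]) fun k => x (i.succAbove (j.succAbove k))) := by
  rw [ins_succ_ext (Nat.add_comm 2 a), sum_isShuffle_two]
  refine Finset.sum_congr rfl fun i _ => Finset.sum_congr rfl fun j hij => ?_
  have hij : i < j.succ := by simpa using hij
  have hone : pairFirst i j 1 = j.succ := by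
    rw [pairFirst_one, Fin.succAbove_of_lt_succ i j hij]
  rw [sign_pairFirst]
  congr 3
  · refine congrArg G (funext fun k => ?_)
    fin_cases k
    · exact congrArg (fun k : Fin (a + 2) => x k) (pairFirst_zero i j)
    · exact congrArg (fun k : Fin (a + 2) => x k) hone
  · funext k
    have hk : (⟨2 + k, by omega⟩ : Fin (a + 2)) = k.succ.succ := Fin.ext (Nat.add_comm 2 k)
    rw [hk, pairFirst_succ_succ]

end InsertionProduct

section Coboundary

variable {L : Type*} [LieRing L] {a : ℕ}

lemma ce_zero (A : (Fin 0 → L) → L) (x : Fin 1 → L) : ce A x = ⁅x 0, A ![]⁆ := by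
  simp [ce, Matrix.empty_eq]

lemma ce_succ (A : (Fin (a + 1) → L) → L) (x : Fin (a + 2) → L) :
    ce A x =
      (∑ i : Fin (a + 2), (-1 : ℤ) ^ (i : ℕ) • ⁅x i, A fun k => x (i.succAbove k)⁆) +
      ∑ i : Fin (a + 2), ∑ j : Fin (a + 1) with i < j.succ, (-1 : ℤ) ^ (i + j + 1 : ℕ) •
        A (Fin.cons ⁅x i, x j.succ⁆ fun k => x (i.succAbove (j.succAbove k))) := by
  rw [ce]
  refine congrArg _ (Finset.sum_congr rfl fun i _ => ?_)
  rw [Fin.sum_univ_succ, if_neg (by simp), zero_add, Finset.sum_filter]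
  refine Finset.sum_congr rfl fun j _ =>
    ite_congr (propext Fin.lt_def.symm) (fun hij => ?_) fun _ => rfl
  refine congrArg _ (congrArg A (funext fun m => ?_))
  induction m using Fin.cases with
  | zero => simp
  | succ k =>
    rw [dif_neg (by simp), Fin.cons_succ]
    refine congrArg x (Fin.ext ?_)
    rw [val_succAbove_succAbove hij]
    simp only [Fin.val_succ, Nat.add_sub_cancel, Nat.add_lt_add_iff_right]

lemma ins_bracket_ext {μ : (Fin 2 → L) → L} (hμ : ∀ x y : L, μ ![x, y] = ⁅x, y⁆)
    (A : (Fin a → L) → L) (x : ℕ → L) :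
    ins 2 a (ext μ) (ext A) x = (-1 : ℤ) ^ (a + 1) •
      ∑ i : Fin (a + 1), (-1 : ℤ) ^ (i : ℕ) • ⁅x i, A fun k => x (i.succAbove k)⁆ := by
  rw [ins_two_ext, Finset.smul_sum]
  refine Finset.sum_congr rfl fun i _ => ?_
  rw [hμ, ← lie_skew, smul_neg, ← neg_smul, smul_smul]
  congr 1
  ring

theorem nij_with_bracket_eq_coboundary_general {μ : (Fin 2 → L) → L}
    (hμ : ∀ x y : L, μ ![x, y] = ⁅x, y⁆) (A : (Fin a → L) → L) :
    nij 2 a (ext μ) (ext A) = fun x => (-1 : ℤ) ^ (a + 1) • ext (ce A) x := by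
  funext x
  rw [nij, ins_bracket_ext hμ]
  cases a with
  | zero => simp [ins_zero, ext, ce_zero, Matrix.empty_eq]
  | succ a =>
    have hsign : (Int.negOnePow (((2 : ℕ) - 1) * ((a + 1 : ℕ) - 1)) : ℤ) = (-1) ^ a := by
      simp [Int.negOnePow_def]
    rw [ins_ext_two, hsign, ext, ce_succ, smul_add, sub_eq_add_neg, ← neg_smul]
    simp only [Finset.smul_sum, smul_smul, hμ]
    refine congrArg _ (Finset.sum_congr rfl fun i _ => Finset.sum_congr rfl fun j _ => ?_)
    congr 1
    ring

end Coboundary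

/-- for a Lie algebra `g` with Lie bracket `μ ∈ C^2(g)` and any `A ∈ C^a(g)`,
the Nijenhuis bracket with `μ` is the Chevalley–Eilenberg coboundary of `A` with adjoint
coefficients, up to a uniform sign: `[μ, A] = (−1)^{a+1} δA`. -/
theorem nij_with_bracket_eq_coboundary
    {R : Type*} [CommRing R] {L : Type*} [LieRing L] [LieAlgebra R L]
    (μ : AlternatingMap R L L (Fin 2)) (hμ : ∀ x y : L, μ ![x, y] = ⁅x, y⁆)
    (a : ℕ) (A : AlternatingMap R L L (Fin a)) :
    nij 2 a (ext ⇑μ) (ext ⇑A) = fun x =>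
      ((-1 : ℤ) ^ (a + 1)) • ext (ce ⇑A) x := by
  exact nij_with_bracket_eq_coboundary_general hμ A
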